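/- Let P be an orthogonal projection, T a self-adjoint involution (T² = I, T* = T), and U = (2P - I)T on a finite-dimensional complex inner product space. Write P = M M* where M has full column rank, and set ψ = M* T M. If z is an eigenvector of ψ with eigenvalue 1, then y = Mz satisfies U y = y. -/

import Mathlib

open Matrix
open scoped ComplexOrder

theorem stmt_3 {m r : ℕ} (P T : Matrix (Fin m) (Fin m) ℂ) (M : Matrix (Fin m) (Fin r) ℂ)
    (hP : P * P = P) (hPh : Pᴴ = P)
    (hT : T * T = 1) (hTh : Tᴴ = T)
    (hPM : P = M * Mᴴ) (hM : Function.Injective M.mulVec)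
    (z : Fin r → ℂ) (hz : z ≠ 0) (hψ : (Mᴴ * T * M).mulVec z = z) :
    ((2 • P - 1) * T).mulVec (M.mulVec z) = M.mulVec z := by
  have cancel : ∀ {k : ℕ} (A B : Matrix (Fin r) (Fin k) ℂ), M * A = M * B → A = B := by
    intro k A B h
    apply Matrix.ext_of_mulVec_single
    intro i
    apply hM
    simp only [Matrix.mulVec_mulVec, h]
  have h1 : Mᴴ * M * Mᴴ = Mᴴ := by
    apply cancel
    rw [hPM] at hP
    simpa only [Matrix.mul_assoc] using hP
  have h2 : M * (Mᴴ * M) = M * (1 : Matrix (Fin r) (Fin r) ℂ) := by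
    have := congrArg Matrix.conjTranspose h1
    simpa [Matrix.conjTranspose_mul, Matrix.mul_assoc] using this
  have h3 : Mᴴ * M = 1 := cancel _ _ h2
  have h4 : (T * M - M)ᴴ * (T * M - M) = 1 - Mᴴ * T * M - Mᴴ * T * M + 1 := by
    have h5 : Mᴴ * T * (T * M) = 1 := by
      rw [Matrix.mul_assoc, ← Matrix.mul_assoc T T M, hT, Matrix.one_mul, h3]
    rw [Matrix.conjTranspose_sub, Matrix.conjTranspose_mul, hTh, Matrix.sub_mul,
      Matrix.mul_sub, Matrix.mul_sub, h5, h3, ← Matrix.mul_assoc]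
    abel
  have h6 : (T * M - M) *ᵥ z = 0 := by
    rw [← Matrix.conjTranspose_mul_self_mulVec_eq_zero, h4]
    simp only [Matrix.add_mulVec, Matrix.sub_mulVec, Matrix.one_mulVec, hψ]
    abel
  have h7 : T *ᵥ (M *ᵥ z) = M *ᵥ z := by
    rw [Matrix.sub_mulVec, sub_eq_zero, ← Matrix.mulVec_mulVec] at h6
    exact h6
  have h8 : P *ᵥ (M *ᵥ z) = M *ᵥ z := by
    rw [hPM, Matrix.mulVec_mulVec, Matrix.mul_assoc, h3, Matrix.mul_one]
  rw [← Matrix.mulVec_mulVec, h7, two_smul, Matrix.sub_mulVec, Matrix.add_mulVec, h8,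
    Matrix.one_mulVec]
  abel
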